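/- Let N ≥ 1 and let ν be a Dirichlet character modulo N with values in ℂ. Define g(y) = ∑_{n=1}^∞ ν(n)·exp(−πn²y/N) and ḡ(y) = ∑_{n=1}^∞ conj(ν(n))·exp(−πn²y/N) for y > 0, and set H(y) = ∫_0^∞ g(y·y')·ḡ(y/y') dy'/y'. Then for every s ∈ ℂ with Re(s) > 1, ∫_0^∞ y^{s−1}·H(y) dy = (1/2)·Γ(s/2)²·(π/N)^{−s} · (∑_{n=1}^∞ ν(n)·n^{−s}) · (∑_{n=1}^∞ conj(ν(n))·n^{−s}). -/

import Mathlib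

open MeasureTheory

/-! In the coordinate `u = log t` the multiplicative convolution `f ⋆ g` becomes an additive one, so
its Mellin transform is the product of those of `f` and `g`. Substituting `t ↦ y t` gives
`∫ f (y t) g (y / t) dt / t = (f ⋆ g) (y ^ 2)`, whose Mellin transform at `s` is therefore half the
product of the transforms of `f` and `g` at `s / 2`. For theta series these are computed termwise by
Euler's integral: `exp (-π n² y / N)` contributes `Γ(s / 2) (π / N) ^ (-s / 2) n ^ (-s)`. -/

section

open Set Real Complex Convolution

section LogCoordinates

variable {E : Type*} [NormedAddCommGroup E]

lemma integrableOn_Ioi_zero_iff_integrable_comp_exp [NormedSpace ℝ E] (F : ℝ → E) :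
    IntegrableOn F (Ioi 0) ↔ Integrable fun u ↦ rexp u • F (rexp u) := by
  have key := integrableOn_image_iff_integrableOn_abs_deriv_smul MeasurableSet.univ
    (fun u _ ↦ (Real.hasDerivAt_exp u).hasDerivWithinAt) Real.exp_injective.injOn F
  simpa only [image_univ, Real.range_exp, Real.abs_exp, integrableOn_univ] using key

lemma integral_Ioi_zero_eq_integral_comp_exp [NormedSpace ℝ E] (F : ℝ → E) :
    ∫ t in Ioi 0, F t = ∫ u, rexp u • F (rexp u) := by
  have key := integral_image_eq_integral_abs_deriv_smul MeasurableSet.univ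
    (fun u _ ↦ (Real.hasDerivAt_exp u).hasDerivWithinAt) Real.exp_injective.injOn F
  simpa only [image_univ, Real.range_exp, Real.abs_exp, setIntegral_univ] using key

variable [NormedSpace ℂ E]

/-- The integrand of the Mellin transform of `f` at `s` in the logarithmic coordinate `u = log t`,
where the measure `dt / t` becomes `du`. -/
noncomputable def mellinLogIntegrand (s : ℂ) (f : ℝ → E) (u : ℝ) : E :=
  cexp (s * u) • f (rexp u)

lemma exp_smul_cpow_smul_comp_exp (s : ℂ) (f : ℝ → E) (u : ℝ) :
    rexp u • ((rexp u : ℝ) : ℂ) ^ (s - 1) • f (rexp u) = mellinLogIntegrand s f u := by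
  have hexp : ((rexp u : ℝ) : ℂ) * ((rexp u : ℝ) : ℂ) ^ (s - 1) = cexp (s * u) := by
    rw [cpow_def_of_ne_zero (ofReal_ne_zero.mpr (Real.exp_pos u).ne'), ← ofReal_log
      (Real.exp_pos u).le, Real.log_exp, ofReal_exp, ← Complex.exp_add]
    ring_nf
  rw [mellinLogIntegrand, ← Complex.coe_smul, ← mul_smul, hexp]

lemma mellinConvergent_iff_integrable_mellinLogIntegrand (f : ℝ → E) (s : ℂ) :
    MellinConvergent f s ↔ Integrable (mellinLogIntegrand s f) := by
  rw [MellinConvergent, integrableOn_Ioi_zero_iff_integrable_comp_exp]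
  simp only [exp_smul_cpow_smul_comp_exp]

lemma mellin_eq_integral_mellinLogIntegrand (f : ℝ → E) (s : ℂ) :
    mellin f s = ∫ u, mellinLogIntegrand s f u := by
  simp only [mellin, integral_Ioi_zero_eq_integral_comp_exp, exp_smul_cpow_smul_comp_exp]

end LogCoordinates

section MulConvolution

/-- The multiplicative convolution of two functions on the positive reals, taken with respect to
the Haar measure `dt / t`. -/
noncomputable def mulConvolution (f g : ℝ → ℂ) (x : ℝ) : ℂ :=
  ∫ t in Ioi (0 : ℝ), f t * g (x / t) / t

lemma mellinLogIntegrand_mulConvolution (s : ℂ) (f g : ℝ → ℂ) :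
    mellinLogIntegrand s (mulConvolution f g) =
      mellinLogIntegrand s f ⋆[ContinuousLinearMap.mul ℝ ℂ] mellinLogIntegrand s g := by
  ext u
  simp only [mellinLogIntegrand, mulConvolution, convolution_def, ContinuousLinearMap.mul_apply',
    smul_eq_mul, integral_Ioi_zero_eq_integral_comp_exp, ← integral_const_mul]
  refine integral_congr_ae (.of_forall fun v ↦ ?_)
  have hexp : cexp (s * u) = cexp (s * v) * cexp (s * (u - v : ℝ)) := by
    rw [← Complex.exp_add]
    push_cast
    ring_nf
  have hne : ((rexp v : ℝ) : ℂ) ≠ 0 := ofReal_ne_zero.mpr (Real.exp_pos v).ne'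
  simp only [hexp, ← Real.exp_sub, real_smul]
  field_simp

theorem hasMellin_mulConvolution {f g : ℝ → ℂ} {s m₁ m₂ : ℂ} (hf : HasMellin f s m₁)
    (hg : HasMellin g s m₂) : HasMellin (mulConvolution f g) s (m₁ * m₂) := by
  obtain ⟨hf, rfl⟩ := hf
  obtain ⟨hg, rfl⟩ := hg
  simp only [HasMellin, mellinConvergent_iff_integrable_mellinLogIntegrand,
    mellin_eq_integral_mellinLogIntegrand, mellinLogIntegrand_mulConvolution] at hf hg ⊢
  exact ⟨hf.integrable_convolution _ hg, integral_convolution _ hf hg⟩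

lemma integral_comp_mul_mul_comp_div_eq_mulConvolution_sq (f g : ℝ → ℂ) {y : ℝ} (hy : 0 < y) :
    ∫ t in Ioi (0 : ℝ), f (y * t) * g (y / t) / t = mulConvolution f g (y ^ 2) := by
  have hscale := integral_comp_mul_left_Ioi (fun t ↦ f t * g (y ^ 2 / t) / t) 0 hy
  have hy' : (y : ℂ) ≠ 0 := ofReal_ne_zero.mpr hy.ne'
  have hdiv (t : ℝ) : y ^ 2 / (y * t) = y / t := by
    rw [sq, mul_div_mul_left _ _ hy.ne']
  rw [mul_zero, real_smul, ofReal_inv, eq_inv_mul_iff_mul_eq₀ hy', ← integral_const_mul] at hscale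
  rw [mulConvolution, ← hscale]
  refine integral_congr_ae (.of_forall fun t ↦ ?_)
  simp only [hdiv, ofReal_mul]
  rw [← mul_div_assoc, mul_div_mul_left _ _ hy']

end MulConvolution

section HasMellin

variable {E : Type*} [NormedAddCommGroup E] [NormedSpace ℂ E]

lemma hasMellin_congr {f g : ℝ → E} {s : ℂ} {m : E} (hfg : EqOn f g (Ioi 0)) :
    HasMellin f s m ↔ HasMellin g s m := by
  have h : EqOn (fun t : ℝ ↦ (t : ℂ) ^ (s - 1) • f t) (fun t ↦ (t : ℂ) ^ (s - 1) • g t) (Ioi 0) :=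
    fun t ht ↦ congrArg ((t : ℂ) ^ (s - 1) • ·) (hfg ht)
  rw [HasMellin, HasMellin, MellinConvergent, MellinConvergent, mellin, mellin,
    integrableOn_congr_fun h measurableSet_Ioi, setIntegral_congr_fun measurableSet_Ioi h]

lemma hasMellin_comp_mul_left {f : ℝ → E} {s : ℂ} {m : E} (hf : HasMellin f s m) {r : ℝ}
    (hr : 0 < r) : HasMellin (fun t ↦ f (r * t)) s ((r : ℂ) ^ (-s) • m) :=
  ⟨(MellinConvergent.comp_mul_left hr).mpr hf.1, by rw [mellin_comp_mul_left f s hr, hf.2]⟩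

lemma hasMellin_comp_sq {f : ℝ → E} {s : ℂ} {m : E} (hf : HasMellin f (s / 2) m) :
    HasMellin (fun t ↦ f (t ^ 2)) s ((1 / 2 : ℂ) • m) := by
  have hconv := MellinConvergent.comp_rpow (f := f) (s := s) (two_ne_zero (α := ℝ))
  have hmellin := mellin_comp_rpow f s 2
  simp only [Real.rpow_two, ofReal_ofNat] at hconv hmellin
  refine ⟨hconv.mpr hf.1, ?_⟩
  rw [hmellin, hf.2, abs_two, ← Complex.coe_smul, ofReal_inv, ofReal_ofNat, one_div]

theorem hasMellin_integral_comp_mul_mul_comp_div {f g : ℝ → ℂ} {s m₁ m₂ : ℂ}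
    (hf : HasMellin f (s / 2) m₁) (hg : HasMellin g (s / 2) m₂) :
    HasMellin (fun y ↦ ∫ t in Ioi (0 : ℝ), f (y * t) * g (y / t) / t) s (1 / 2 * (m₁ * m₂)) :=
  (hasMellin_congr fun _ hy ↦ integral_comp_mul_mul_comp_div_eq_mulConvolution_sq f g hy).mpr
    (hasMellin_comp_sq (hasMellin_mulConvolution hf hg))

end HasMellin

section Series

variable {ι : Type*} [Countable ι]

lemma integrable_tsum_of_summable_integral_norm {α E : Type*} [MeasurableSpace α] {μ : Measure α}
    [NormedAddCommGroup E] [CompleteSpace E] {F : ι → α → E} (hF : ∀ i, Integrable (F i) μ)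
    (hsum : Summable fun i ↦ ∫ x, ‖F i x‖ ∂μ) : Integrable (fun x ↦ ∑' i, F i x) μ := by
  have hnorm : Summable fun i ↦ ‖(hF i).toL1 (F i)‖ := by
    simpa only [L1.norm_of_fun_eq_integral_norm] using hsum
  have htsum := Lp.coeFn_tsum (tsum_enorm_ne_top_iff_summable_norm.mpr hnorm)
  have hrep : ∀ᵐ x ∂μ, ∀ i, (hF i).toL1 (F i) x = F i x :=
    ae_all_iff.mpr fun i ↦ (hF i).coeFn_toL1
  refine (L1.integrable_coeFn (∑' i, (hF i).toL1 (F i))).congr ?_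
  filter_upwards [htsum, hrep] with x hx hx'
  simp only [hx, hx']

lemma hasMellin_tsum {f : ι → ℝ → ℂ} {s : ℂ} (hf : ∀ i, MellinConvergent (f i) s)
    (hsum : Summable fun i ↦ ∫ t in Ioi (0 : ℝ), ‖(t : ℂ) ^ (s - 1) • f i t‖) :
    HasMellin (fun t ↦ ∑' i, f i t) s (∑' i, mellin (f i) s) := by
  simp only [HasMellin, MellinConvergent, mellin, smul_eq_mul, ← tsum_mul_left] at hf hsum ⊢
  exact ⟨integrable_tsum_of_summable_integral_norm hf hsum,
    (integral_tsum_of_summable_integral_norm hf hsum).symm⟩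

lemma hasMellin_exp_neg_mul {r : ℝ} (hr : 0 < r) {s : ℂ} (hs : 0 < s.re) :
    HasMellin (fun t ↦ (rexp (-(r * t)) : ℂ)) s ((r : ℂ) ^ (-s) * Complex.Gamma s) := by
  have hconv : MellinConvergent (fun t ↦ (rexp (-t) : ℂ)) s := by
    simpa only [MellinConvergent, smul_eq_mul, mul_comm] using
      Complex.GammaIntegral_convergent hs
  have hmellin : mellin (fun t ↦ (rexp (-t) : ℂ)) s = Complex.Gamma s := by
    rw [Complex.Gamma_eq_integral hs, GammaIntegral_eq_mellin]
  exact hasMellin_comp_mul_left ⟨hconv, hmellin⟩ hr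

lemma integral_norm_cpow_smul_const_mul_exp_neg_mul (a : ℂ) {r : ℝ} (hr : 0 < r) {s : ℂ}
    (hs : 0 < s.re) :
    ∫ t in Ioi (0 : ℝ), ‖(t : ℂ) ^ (s - 1) • (a * (rexp (-(r * t)) : ℂ))‖ =
      Real.Gamma s.re * (‖a‖ / r ^ s.re) := by
  calc ∫ t in Ioi (0 : ℝ), ‖(t : ℂ) ^ (s - 1) • (a * (rexp (-(r * t)) : ℂ))‖
      = ∫ t in Ioi (0 : ℝ), ‖a‖ * (t ^ (s.re - 1) * rexp (-(r * t))) := by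
        refine setIntegral_congr_fun measurableSet_Ioi fun t ht ↦ ?_
        simp only [norm_smul, norm_mul, norm_cpow_eq_rpow_re_of_pos ht, norm_real, sub_re, one_re,
          Real.norm_of_nonneg (Real.exp_pos _).le]
        ring
    _ = Real.Gamma s.re * (‖a‖ / r ^ s.re) := by
        rw [integral_const_mul, Real.integral_rpow_mul_exp_neg_mul_Ioi hs hr,
          Real.div_rpow zero_le_one hr.le, Real.one_rpow]
        ring

theorem hasMellin_tsum_mul_exp_neg_mul {a : ι → ℂ} {p : ι → ℝ} (hp : ∀ i, 0 < p i) {s : ℂ}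
    (hs : 0 < s.re) (hsum : Summable fun i ↦ ‖a i‖ / p i ^ s.re) :
    HasMellin (fun t ↦ ∑' i, a i * (rexp (-(p i * t)) : ℂ)) s
      (∑' i, a i * ((p i : ℂ) ^ (-s) * Complex.Gamma s)) := by
  have hterm (i : ι) : HasMellin (fun t ↦ a i * (rexp (-(p i * t)) : ℂ)) s
      (a i * ((p i : ℂ) ^ (-s) * Complex.Gamma s)) := by
    have h := hasMellin_exp_neg_mul (hp i) hs
    simpa only [smul_eq_mul, h.2] using hasMellin_const_smul h.1 (a i)
  simp only [← (hterm _).2]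
  refine hasMellin_tsum (fun i ↦ (hterm i).1) ?_
  simp only [integral_norm_cpow_smul_const_mul_exp_neg_mul _ (hp _) hs]
  exact hsum.mul_left _

end Series

section Theta

/-- The theta series `∑ a(n) exp(-π n² y / N)`, `n ≥ 1`, attached to the coefficients `a` and the
level `N`. It depends on `a` only through its values at positive integers, as does `LSeries a`. -/
noncomputable def thetaSeries (a : ℕ → ℂ) (N y : ℝ) : ℂ :=
  ∑' n : ℕ, a (n + 1) * (rexp (-π * (n + 1) ^ 2 * y / N) : ℂ)

lemma LSeries_eq_tsum_succ (a : ℕ → ℂ) (s : ℂ) :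
    LSeries a s = ∑' n : ℕ, a (n + 1) * ((n + 1 : ℕ) : ℂ) ^ (-s) := by
  have hsupp : Function.support (LSeries.term a s) ⊆ range Nat.succ := fun n hn ↦
    ⟨n.pred, Nat.succ_pred_eq_of_ne_zero fun h ↦ hn (h ▸ LSeries.term_zero a s)⟩
  rw [LSeries, ← Nat.succ_injective.tsum_eq hsupp]
  refine tsum_congr fun n ↦ ?_
  rw [LSeries.term_of_ne_zero n.succ_ne_zero, cpow_neg, div_eq_mul_inv]

lemma ofReal_mul_sq_cpow_neg_half {c x : ℝ} (hc : 0 ≤ c) (hx : 0 ≤ x) (s : ℂ) :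
    ((c * x ^ 2 : ℝ) : ℂ) ^ (-(s / 2)) = (c : ℂ) ^ (-(s / 2)) * (x : ℂ) ^ (-s) := by
  have harg : arg (x : ℂ) = 0 := arg_ofReal_of_nonneg hx
  have hsq : ((x ^ 2 : ℝ) : ℂ) ^ (-(s / 2)) = (x : ℂ) ^ (-s) := by
    rw [ofReal_pow, ← cpow_nat_mul' (by simp [harg, Real.pi_pos]) (by simp [harg, Real.pi_nonneg])]
    push_cast
    ring_nf
  rw [ofReal_mul, mul_cpow_ofReal_nonneg hc (sq_nonneg x), hsq]

theorem hasMellin_thetaSeries {a : ℕ → ℂ} {N : ℝ} (hN : 0 < N) {s : ℂ} (hs : 0 < s.re)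
    (ha : LSeriesSummable a s) :
    HasMellin (thetaSeries a N) (s / 2)
      (Complex.Gamma (s / 2) * ((π / N : ℝ) : ℂ) ^ (-(s / 2)) * LSeries a s) := by
  let p (n : ℕ) : ℝ := π / N * ((n + 1 : ℕ) : ℝ) ^ 2
  have hc : 0 < π / N := div_pos pi_pos hN
  have hp (n : ℕ) : 0 < p n := by positivity
  have hre : (s / 2).re = s.re / 2 := div_ofNat_re s 2
  have hsum : Summable fun n ↦ ‖a (n + 1)‖ / p n ^ (s / 2).re := by
    have h := ((summable_nat_add_iff 1).mpr ha.norm).div_const ((π / N) ^ (s.re / 2))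
    refine h.congr fun n ↦ ?_
    have hsq : (((n + 1 : ℕ) : ℝ) ^ 2) ^ (s.re / 2) = ((n + 1 : ℕ) : ℝ) ^ s.re := by
      rw [← Real.rpow_natCast_mul (Nat.cast_nonneg _)]
      ring_nf
    rw [LSeries.norm_term_eq, if_neg n.succ_ne_zero, hre, Real.mul_rpow hc.le (sq_nonneg _), hsq,
      div_div, mul_comm]
  have htheta : thetaSeries a N = fun y ↦ ∑' n, a (n + 1) * (rexp (-(p n * y)) : ℂ) := by
    funext y
    refine tsum_congr fun n ↦ ?_
    simp only [p]
    push_cast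
    ring_nf
  have hvalue : Complex.Gamma (s / 2) * ((π / N : ℝ) : ℂ) ^ (-(s / 2)) * LSeries a s =
      ∑' n, a (n + 1) * ((p n : ℂ) ^ (-(s / 2)) * Complex.Gamma (s / 2)) := by
    rw [LSeries_eq_tsum_succ, ← tsum_mul_left]
    refine tsum_congr fun n ↦ ?_
    rw [ofReal_mul_sq_cpow_neg_half hc.le (Nat.cast_nonneg _), ofReal_natCast]
    ring
  rw [htheta, hvalue]
  exact hasMellin_tsum_mul_exp_neg_mul hp (by rw [hre]; positivity) hsum

end Theta

theorem stmt13_general {a b : ℕ → ℂ} {N : ℝ} (hN : 0 < N) {g h H : ℝ → ℂ}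
    (hg : ∀ y, g y = thetaSeries a N y) (hh : ∀ y, h y = thetaSeries b N y)
    (hH : ∀ y, H y = ∫ t in Ioi (0 : ℝ), g (y * t) * h (y / t) / t) {s : ℂ} (hs : 0 < s.re)
    (ha : LSeriesSummable a s) (hb : LSeriesSummable b s) :
    HasMellin H s
      (1 / 2 * Complex.Gamma (s / 2) ^ 2 * ((π / N : ℝ) : ℂ) ^ (-s) *
        (LSeries a s * LSeries b s)) := by
  obtain rfl := funext hg
  obtain rfl := funext hh
  obtain rfl := funext hH
  have hcpow : ((π / N : ℝ) : ℂ) ^ (-s) = (((π / N : ℝ) : ℂ) ^ (-(s / 2))) ^ 2 := by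
    rw [← cpow_nat_mul]
    push_cast
    ring_nf
  convert! hasMellin_integral_comp_mul_mul_comp_div (hasMellin_thetaSeries hN hs ha)
    (hasMellin_thetaSeries hN hs hb) using 1
  rw [hcpow]
  ring

end

/-- The product `L(s,ν)L(s,conj ν)` is the Mellin transform of the multiplicative
convolution `H` of the two ϑ-series: for `Re(s) > 1`,
`∫_0^∞ y^(s-1) H(y) dy = (1/2) Γ(s/2)² (π/N)^(-s) L(s,ν) L(s,conj ν)`. -/
theorem stmt13 (N : ℕ) (hN : 1 ≤ N) (ν : DirichletCharacter ℂ N)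
    (g gbar H : ℝ → ℂ)
    (hg : ∀ y : ℝ, g y = ∑' n : ℕ, ν ((n + 1 : ℕ) : ZMod N) *
      ((Real.exp (-Real.pi * (n + 1) ^ 2 * y / N) : ℝ) : ℂ))
    (hgbar : ∀ y : ℝ, gbar y = ∑' n : ℕ, (starRingEnd ℂ) (ν ((n + 1 : ℕ) : ZMod N)) *
      ((Real.exp (-Real.pi * (n + 1) ^ 2 * y / N) : ℝ) : ℂ))
    (hH : ∀ y : ℝ, H y = ∫ y' in Set.Ioi (0 : ℝ), g (y * y') * gbar (y / y') / (y' : ℂ))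
    (s : ℂ) (hs : 1 < s.re) :
    ∫ y in Set.Ioi (0 : ℝ), (y : ℂ) ^ (s - 1) * H y
      = (1 / 2) * Complex.Gamma (s / 2) ^ 2 * ((Real.pi / N : ℝ) : ℂ) ^ (-s) *
        ((∑' n : ℕ, ν ((n + 1 : ℕ) : ZMod N) * ((n + 1 : ℕ) : ℂ) ^ (-s)) *
          (∑' n : ℕ, (starRingEnd ℂ) (ν ((n + 1 : ℕ) : ZMod N)) * ((n + 1 : ℕ) : ℂ) ^ (-s))) := by
  have hν (n : ℕ) : ‖ν n‖ ≤ 1 := ν.norm_le_one n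
  have hνbar (n : ℕ) : ‖starRingEnd ℂ (ν n)‖ ≤ 1 := (RCLike.norm_conj _).trans_le (hν n)
  simpa only [mellin, smul_eq_mul, LSeries_eq_tsum_succ] using
    (stmt13_general (a := fun n ↦ ν n) (b := fun n ↦ starRingEnd ℂ (ν n)) (Nat.cast_pos.mpr hN)
      hg hgbar hH (one_pos.trans hs)
      (LSeriesSummable_of_bounded_of_one_lt_re (fun n _ ↦ hν n) hs)
      (LSeriesSummable_of_bounded_of_one_lt_re (fun n _ ↦ hνbar n) hs)).2
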